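/- Let α > 0, γ ∈ ℝ, and define ψ_V(ν,γ) = −(1/π)∫₀^∞ (1 + z²)^{−1/2}·J₀(2ν√(z² + γ²)) dz as a function of ν = √α and γ. Then ψ_V satisfies the wave equation ∂²ψ_V/∂ν∂γ + 4νγ·ψ_V = 0, assuming differentiation under the integral sign is valid. -/

import Mathlib

/-- Bessel function of the first kind of integer order `n`,
via the Bessel integral representation. -/
noncomputable def besselJ (n : ℤ) (z : ℝ) : ℝ :=
  (1 / Real.pi) * ∫ θ in (0:ℝ)..Real.pi, Real.cos (n * θ - z * Real.sin θ)

/-- The Veronis Green's function, as a function of `ν = √α` and `γ`: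
`ψ_V(ν,γ) = −(1/π)∫₀^∞ (1+z²)^{−1/2} J₀(2ν√(z²+γ²)) dz`. -/
noncomputable def psiV (ν γ : ℝ) : ℝ :=
  -(1 / Real.pi) * ∫ z in Set.Ioi (0:ℝ),
    (1 + z ^ 2) ^ (-(1:ℝ)/2) * besselJ 0 (2 * ν * Real.sqrt (z ^ 2 + γ ^ 2))

noncomputable def jA (x : ℝ) : ℝ := ∫ θ in (0:ℝ)..Real.pi, Real.cos (x * Real.sin θ)
noncomputable def jB (x : ℝ) : ℝ := ∫ θ in (0:ℝ)..Real.pi, -(Real.sin θ * Real.sin (x * Real.sin θ))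
noncomputable def jC (x : ℝ) : ℝ :=
  ∫ θ in (0:ℝ)..Real.pi, -(Real.sin θ * (Real.sin θ * Real.cos (x * Real.sin θ)))

lemma besselJ_zero (x : ℝ) : besselJ 0 x = (1 / Real.pi) * jA x := by
  simp [besselJ, jA]

lemma jA_deriv (x : ℝ) : HasDerivAt jA (jB x) x := by
  refine (intervalIntegral.hasDerivAt_integral_of_dominated_loc_of_deriv_le
    (F := fun x θ => Real.cos (x * Real.sin θ))
    (F' := fun x θ => -(Real.sin θ * Real.sin (x * Real.sin θ)))
    (bound := fun _ => 1) (s := Set.univ) Filter.univ_mem ?_ ?_ ?_ ?_ ?_ ?_).2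
  · exact Filter.Eventually.of_forall fun y => (by fun_prop : Continuous _).aestronglyMeasurable
  · exact (by fun_prop : Continuous _).intervalIntegrable _ _
  · exact (by fun_prop : Continuous _).aestronglyMeasurable
  · refine Filter.Eventually.of_forall fun θ _ y _ => ?_
    rw [norm_neg, norm_mul]
    exact mul_le_one₀ (Real.abs_sin_le_one _) (abs_nonneg _) (Real.abs_sin_le_one _)
  · exact intervalIntegrable_const
  · refine Filter.Eventually.of_forall fun θ _ y _ => ?_
    refine ((hasDerivAt_id y).mul_const (Real.sin θ)).cos.congr_deriv ?_
    simp only [id]; ring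

lemma jB_deriv (x : ℝ) : HasDerivAt jB (jC x) x := by
  refine (intervalIntegral.hasDerivAt_integral_of_dominated_loc_of_deriv_le
    (F := fun x θ => -(Real.sin θ * Real.sin (x * Real.sin θ)))
    (F' := fun x θ => -(Real.sin θ * (Real.sin θ * Real.cos (x * Real.sin θ))))
    (bound := fun _ => 1) (s := Set.univ) Filter.univ_mem ?_ ?_ ?_ ?_ ?_ ?_).2
  · exact Filter.Eventually.of_forall fun y => (by fun_prop : Continuous _).aestronglyMeasurable
  · exact (by fun_prop : Continuous _).intervalIntegrable _ _
  · exact (by fun_prop : Continuous _).aestronglyMeasurable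
  · refine Filter.Eventually.of_forall fun θ _ y _ => ?_
    rw [norm_neg, norm_mul, norm_mul]
    exact mul_le_one₀ (Real.abs_sin_le_one _) (by positivity)
      (mul_le_one₀ (Real.abs_sin_le_one _) (by positivity) (Real.abs_cos_le_one _))
  · exact intervalIntegrable_const
  · refine Filter.Eventually.of_forall fun θ _ y _ => ?_
    refine (((hasDerivAt_id y).mul_const (Real.sin θ)).sin.const_mul (Real.sin θ)).neg.congr_deriv ?_
    simp only [id]; ring

lemma jA_le (x : ℝ) : |jA x| ≤ Real.pi := by
  have := intervalIntegral.norm_integral_le_of_norm_le_const (a := 0) (b := Real.pi)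
    (f := fun θ => Real.cos (x * Real.sin θ)) (C := 1) (fun θ _ => Real.abs_cos_le_one _)
  simpa [abs_of_pos Real.pi_pos, jA] using this

lemma jB_le (x : ℝ) : |jB x| ≤ Real.pi := by
  have := intervalIntegral.norm_integral_le_of_norm_le_const (a := 0) (b := Real.pi)
    (f := fun θ => -(Real.sin θ * Real.sin (x * Real.sin θ))) (C := 1) (fun θ _ => by
      rw [norm_neg, norm_mul]
      exact mul_le_one₀ (Real.abs_sin_le_one _) (abs_nonneg _) (Real.abs_sin_le_one _))
  simpa [abs_of_pos Real.pi_pos, jB] using this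

lemma jODE (x : ℝ) : x * (jC x + jA x) = - jB x := by
  have h : ∫ θ in (0:ℝ)..Real.pi, (-(Real.sin θ * Real.sin (x * Real.sin θ)) +
      x * (-(Real.sin θ * (Real.sin θ * Real.cos (x * Real.sin θ))) + Real.cos (x * Real.sin θ)))
      = 0 := by
    rw [intervalIntegral.integral_eq_sub_of_hasDerivAt
      (f := fun θ => Real.cos θ * Real.sin (x * Real.sin θ))]
    · simp
    · intro θ _
      refine ((Real.hasDerivAt_cos θ).mul (((Real.hasDerivAt_sin θ).const_mul x).sin)).congr_deriv ?_
      have := Real.sin_sq_add_cos_sq θ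
      linear_combination (x * Real.cos (x * Real.sin θ)) * this
    · exact (by fun_prop : Continuous _).intervalIntegrable _ _
  rw [intervalIntegral.integral_add, intervalIntegral.integral_const_mul,
    intervalIntegral.integral_add] at h
  · change jB x + x * (jC x + jA x) = 0 at h
    linarith
  all_goals exact (by fun_prop : Continuous _).intervalIntegrable _ _

noncomputable def jE (x : ℝ) : ℝ :=
  x * (jB x ^ 2 + jA x ^ 2) + jA x * jB x + jA x ^ 2 / (2 * x)

lemma jE_deriv (x : ℝ) (hx : 0 < x) : HasDerivAt jE (-(jA x ^ 2) / (2 * x ^ 2)) x := by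
  have hA := jA_deriv x
  have hB := jB_deriv x
  have h := (((hasDerivAt_id x).mul ((hB.pow 2).add (hA.pow 2))).add (hA.mul hB)).add
    ((hA.pow 2).div ((hasDerivAt_id x).const_mul 2) (by simp; positivity))
  refine h.congr_deriv ?_
  have hC : jC x = - jB x / x - jA x := by
    have := jODE x
    field_simp
    linarith
  rw [hC]
  simp
  field_simp
  ring

lemma j_decay : ∃ C : ℝ, 0 < C ∧ ∀ x, 0 < x → |jA x| ≤ C / Real.sqrt x := by
  have anti : AntitoneOn jE (Set.Ici 1) := by
    apply antitoneOn_of_deriv_nonpos (convex_Ici 1)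
    · intro x hx
      exact (jE_deriv x (lt_of_lt_of_le one_pos hx)).continuousAt.continuousWithinAt
    · intro x hx
      rw [interior_Ici] at hx
      exact (jE_deriv x (lt_trans one_pos hx)).differentiableAt.differentiableWithinAt
    · intro x hx
      rw [interior_Ici] at hx
      rw [(jE_deriv x (lt_trans one_pos hx)).deriv]
      apply div_nonpos_of_nonpos_of_nonneg <;> nlinarith [sq_nonneg (jA x), sq_nonneg x]
  refine ⟨Real.sqrt (2 * |jE 1| + Real.pi ^ 2), Real.sqrt_pos.2 (by positivity), fun x hx => ?_⟩
  rw [le_div_iff₀ (Real.sqrt_pos.2 hx)]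
  apply Real.le_sqrt_of_sq_le
  rw [mul_pow, Real.sq_sqrt hx.le, sq_abs]
  rcases le_total x 1 with h | h
  · have := jA_le x
    have h2 : jA x ^ 2 ≤ Real.pi ^ 2 := sq_le_sq' (by linarith [abs_le.1 this]) (abs_le.1 this).2
    nlinarith [abs_nonneg (jE 1), sq_nonneg (jA x)]
  · have h1 := anti (Set.mem_Ici.2 le_rfl) (Set.mem_Ici.2 h) h
    have h2 : 0 ≤ jA x ^ 2 / (2 * x) := by positivity
    have h3 : x * (jB x ^ 2 + jA x ^ 2) + jA x * jB x ≤ jE 1 := by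
      unfold jE at h1 ⊢; linarith
    have := le_abs_self (jE 1)
    nlinarith [sq_nonneg (jA x + jB x), sq_nonneg Real.pi, mul_nonneg (sub_nonneg.2 h) (add_nonneg (sq_nonneg (jA x)) (sq_nonneg (jB x))), sq_nonneg (jB x), mul_nonneg hx.le (sq_nonneg (jB x))]

open MeasureTheory in
lemma W_int : IntegrableOn (fun z : ℝ => (1 + z ^ 2) ^ (-(1:ℝ)/2) * (1 / Real.sqrt z)) (Set.Ioi 0) := by
  have hm : Measurable (fun z : ℝ => (1 + z ^ 2) ^ (-(1:ℝ)/2) * (1 / Real.sqrt z)) := by fun_prop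
  rw [← Set.Ioc_union_Ioi_eq_Ioi (zero_le_one (α := ℝ))]
  apply IntegrableOn.union
  · have h := (intervalIntegrable_iff_integrableOn_Ioc_of_le (zero_le_one (α := ℝ))).1
      (intervalIntegral.intervalIntegrable_rpow' (a := 0) (b := 1) (r := -(1:ℝ)/2) (by norm_num))
    refine Integrable.mono' h hm.aestronglyMeasurable ?_
    refine (ae_restrict_iff' measurableSet_Ioc).2 (Filter.Eventually.of_forall fun z hz => ?_)
    have hz0 : 0 < z := hz.1
    rw [Real.norm_of_nonneg (by positivity), neg_div, Real.rpow_neg hz0.le, ← Real.sqrt_eq_rpow,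
      ← one_div (√z)]
    apply mul_le_of_le_one_left (by positivity)
    apply Real.rpow_le_one_of_one_le_of_nonpos <;> nlinarith
  · have h := integrableOn_Ioi_rpow_of_lt (a := -(3:ℝ)/2) (c := 1) (by norm_num) one_pos
    refine Integrable.mono' h hm.aestronglyMeasurable ?_
    refine (ae_restrict_iff' measurableSet_Ioi).2 (Filter.Eventually.of_forall fun z hz => ?_)
    have hz0 : 0 < z := lt_trans one_pos hz
    rw [Real.norm_of_nonneg (by positivity)]
    have e : z ^ (-(3:ℝ)/2) = (z ^ 2) ^ (-(1:ℝ)/2) * (1 / Real.sqrt z) := by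
      rw [Real.sqrt_eq_rpow, one_div, ← Real.rpow_neg hz0.le, ← Real.rpow_natCast z 2,
        ← Real.rpow_mul hz0.le, ← Real.rpow_add hz0]
      norm_num
    rw [e]
    refine mul_le_mul_of_nonneg_right ?_ (by positivity)
    exact Real.rpow_le_rpow_of_nonpos (by positivity) (by linarith) (by norm_num)

lemma jA_cont : Continuous jA := continuous_iff_continuousAt.2 fun x => (jA_deriv x).continuousAt
lemma jB_cont : Continuous jB := continuous_iff_continuousAt.2 fun x => (jB_deriv x).continuousAt

lemma R_deriv (z g : ℝ) (hz : 0 < z) :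
    HasDerivAt (fun g => Real.sqrt (z ^ 2 + g ^ 2)) (g / Real.sqrt (z ^ 2 + g ^ 2)) g := by
  refine (((hasDerivAt_pow 2 g).const_add (z ^ 2)).sqrt (by positivity)).congr_deriv ?_
  have : 0 < Real.sqrt (z ^ 2 + g ^ 2) := Real.sqrt_pos.2 (by positivity)
  field_simp
  simp

lemma P_deriv (ν z g : ℝ) (hz : 0 < z) :
    HasDerivAt (fun g => 2 * Real.sqrt (z ^ 2 + g ^ 2) * jB (2 * ν * Real.sqrt (z ^ 2 + g ^ 2)))
      (-(4 * ν * g) * jA (2 * ν * Real.sqrt (z ^ 2 + g ^ 2))) g := by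
  have hR := R_deriv z g hz
  have h := (hR.const_mul 2).mul ((jB_deriv _).comp g (hR.const_mul (2 * ν)))
  refine h.congr_deriv ?_
  have hp : 0 < Real.sqrt (z ^ 2 + g ^ 2) := Real.sqrt_pos.2 (by positivity)
  have ode := jODE (2 * ν * Real.sqrt (z ^ 2 + g ^ 2))
  simp only [Function.comp]
  generalize Real.sqrt (z ^ 2 + g ^ 2) = R at *
  have : jB (2 * ν * R) = - (2 * ν * R * (jC (2 * ν * R) + jA (2 * ν * R))) := by linarith
  rw [this]
  field_simp
  ring

lemma jA_bound {C : ℝ} (hC : 0 < C) (h : ∀ x, 0 < x → |jA x| ≤ C / Real.sqrt x)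
    (c ν z g : ℝ) (hc : 0 < c) (hν : c ≤ ν) (hz : 0 < z) :
    |jA (2 * ν * Real.sqrt (z ^ 2 + g ^ 2))| ≤ C / Real.sqrt (2 * c) * (1 / Real.sqrt z) := by
  have hR : z ≤ Real.sqrt (z ^ 2 + g ^ 2) := Real.le_sqrt_of_sq_le (by nlinarith)
  have hp : 0 < Real.sqrt (z ^ 2 + g ^ 2) := lt_of_lt_of_le hz hR
  have hν0 : 0 < ν := lt_of_lt_of_le hc hν
  refine (h _ (by positivity)).trans ?_
  rw [div_mul_div_comm, mul_one, ← Real.sqrt_mul (by positivity)]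
  gcongr

lemma P_bound {C : ℝ} (hC : 0 < C) (h : ∀ x, 0 < x → |jA x| ≤ C / Real.sqrt x)
    (c ν z g : ℝ) (hc : 0 < c) (hν : c ≤ ν) (hz : 0 < z) :
    |2 * Real.sqrt (z ^ 2 + g ^ 2) * jB (2 * ν * Real.sqrt (z ^ 2 + g ^ 2))
      - 2 * z * jB (2 * ν * z)| ≤ 4 * ν * g ^ 2 * (C / Real.sqrt (2 * c) * (1 / Real.sqrt z)) := by
  have hν0 : 0 < ν := lt_of_lt_of_le hc hν
  have := Convex.norm_image_sub_le_of_norm_hasDerivWithin_le (s := Set.Icc (-|g|) |g|)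
    (C := 4 * ν * |g| * (C / Real.sqrt (2 * c) * (1 / Real.sqrt z))) (x := 0) (y := g)
    (fun g' _ => (P_deriv ν z g' hz).hasDerivWithinAt) (fun g' hg' => by
      rw [norm_mul]
      have h1 : |g'| ≤ |g| := abs_le.2 hg'
      refine mul_le_mul ?_ (jA_bound hC h c ν z g' hc hν hz) (norm_nonneg _) (by positivity)
      rw [norm_neg, norm_mul, Real.norm_of_nonneg (by positivity : 0 ≤ 4 * ν)]
      gcongr
      exact h1) (convex_Icc _ _) ⟨by simp, by simp⟩ (abs_le.1 le_rfl)
  simp only [Real.norm_eq_abs, sub_zero] at this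
  rw [zero_pow two_ne_zero, add_zero, Real.sqrt_sq hz.le] at this
  refine this.trans (le_of_eq ?_)
  rw [← sq_abs g]
  ring

open MeasureTheory in
lemma I_int (ν g : ℝ) (hν : 0 < ν) : IntegrableOn (fun z : ℝ =>
    (1 + z ^ 2) ^ (-(1:ℝ)/2) * jA (2 * ν * Real.sqrt (z ^ 2 + g ^ 2))) (Set.Ioi 0) := by
  obtain ⟨C, hC, h⟩ := j_decay
  have hA := jA_cont.measurable
  refine Integrable.mono' (W_int.const_mul (C / Real.sqrt (2 * ν)))
    (by fun_prop : Measurable _).aestronglyMeasurable ?_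
  refine (ae_restrict_iff' measurableSet_Ioi).2 (Filter.Eventually.of_forall fun z hz => ?_)
  rw [norm_mul, Real.norm_of_nonneg (by positivity), mul_left_comm]
  gcongr
  exact jA_bound hC h ν ν z g hν le_rfl hz

open MeasureTheory in
lemma I0_int (ν : ℝ) (hν : 0 < ν) : IntegrableOn (fun z : ℝ =>
    (1 + z ^ 2) ^ (-(1:ℝ)/2) * jA (2 * ν * z)) (Set.Ioi 0) := by
  refine (I_int ν 0 hν).congr_fun (fun z hz => ?_) measurableSet_Ioi
  simp [Real.sqrt_sq (le_of_lt (Set.mem_Ioi.1 hz))]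

open MeasureTheory in
lemma D_deriv (ν₀ g : ℝ) (hν : 0 < ν₀) :
    Integrable (fun z : ℝ => (1 + z ^ 2) ^ (-(1:ℝ)/2) *
      (2 * Real.sqrt (z ^ 2 + g ^ 2) * jB (2 * ν₀ * Real.sqrt (z ^ 2 + g ^ 2))
        - 2 * z * jB (2 * ν₀ * z))) (volume.restrict (Set.Ioi 0)) ∧
    HasDerivAt (fun ν => ∫ z in Set.Ioi (0:ℝ), (1 + z ^ 2) ^ (-(1:ℝ)/2) *
      (jA (2 * ν * Real.sqrt (z ^ 2 + g ^ 2)) - jA (2 * ν * z)))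
     (∫ z in Set.Ioi (0:ℝ), (1 + z ^ 2) ^ (-(1:ℝ)/2) *
      (2 * Real.sqrt (z ^ 2 + g ^ 2) * jB (2 * ν₀ * Real.sqrt (z ^ 2 + g ^ 2))
        - 2 * z * jB (2 * ν₀ * z))) ν₀ := by
  obtain ⟨C, hC, h⟩ := j_decay
  have hA := jA_cont.measurable
  have hB := jB_cont.measurable
  refine hasDerivAt_integral_of_dominated_loc_of_deriv_le (μ := volume.restrict (Set.Ioi (0:ℝ)))
    (F := fun ν z => (1 + z ^ 2) ^ (-(1:ℝ)/2) *
      (jA (2 * ν * Real.sqrt (z ^ 2 + g ^ 2)) - jA (2 * ν * z)))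
    (F' := fun ν z => (1 + z ^ 2) ^ (-(1:ℝ)/2) *
      (2 * Real.sqrt (z ^ 2 + g ^ 2) * jB (2 * ν * Real.sqrt (z ^ 2 + g ^ 2))
        - 2 * z * jB (2 * ν * z)))
    (bound := fun z => (4 * (2 * ν₀) * g ^ 2 * (C / Real.sqrt (2 * (ν₀ / 2)))) *
      ((1 + z ^ 2) ^ (-(1:ℝ)/2) * (1 / Real.sqrt z)))
    (s := Set.Ioo (ν₀ / 2) (2 * ν₀)) (Ioo_mem_nhds (by linarith) (by linarith)) ?_ ?_ ?_ ?_ ?_ ?_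
  · exact Filter.Eventually.of_forall fun y => (by fun_prop : Measurable _).aestronglyMeasurable
  · simp_rw [mul_sub]
    exact (I_int ν₀ g hν).sub (I0_int ν₀ hν)
  · exact (by fun_prop : Measurable _).aestronglyMeasurable
  · refine (ae_restrict_iff' measurableSet_Ioi).2 (Filter.Eventually.of_forall fun z hz ν hν' => ?_)
    have hz0 : 0 < z := hz
    have hν0 : 0 < ν := lt_trans (by positivity) hν'.1
    rw [norm_mul, Real.norm_of_nonneg (by positivity), mul_left_comm]
    refine mul_le_mul_of_nonneg_left ?_ (by positivity)
    refine (P_bound hC h (ν₀ / 2) ν z g (by positivity) hν'.1.le hz0).trans ?_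
    rw [← mul_assoc]
    have := hν'.2.le
    gcongr
  · exact W_int.const_mul _
  · refine (Filter.Eventually.of_forall fun z ν hν' => ?_)
    have hd (a : ℝ) : HasDerivAt (fun ν => jA (2 * ν * a)) (2 * a * jB (2 * ν * a)) ν := by
      refine ((jA_deriv _).comp ν (((hasDerivAt_id ν).const_mul 2).mul_const a)).congr_deriv ?_
      simp only [id]; ring
    exact ((hd _).sub (hd _)).const_mul _

open MeasureTheory in
lemma A_deriv (ν₀ : ℝ) (hν : 0 < ν₀) :
    ∃ a, HasDerivAt (fun ν => ∫ z in Set.Ioi (0:ℝ), (1 + z ^ 2) ^ (-(1:ℝ)/2) * jA (2 * ν * z))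
      a ν₀ := by
  have hA := jA_cont.measurable
  have key : ∀ ν : ℝ, 0 < ν → ∫ z in Set.Ioi (0:ℝ), (1 + z ^ 2) ^ (-(1:ℝ)/2) * jA (2 * ν * z)
      = ∫ u in Set.Ioi (0:ℝ), (Real.sqrt (ν ^ 2 + u ^ 2))⁻¹ * jA (2 * u) := by
    intro ν hν
    have := integral_comp_mul_left_Ioi' (fun u => (Real.sqrt (ν ^ 2 + u ^ 2))⁻¹ * jA (2 * u)) 0 hν
    rw [mul_zero] at this
    rw [← this, smul_eq_mul, ← integral_const_mul]
    congr 1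
    ext z
    have e : ν ^ 2 + (ν * z) ^ 2 = ν ^ 2 * (1 + z ^ 2) := by ring
    rw [e, Real.sqrt_mul (by positivity), Real.sqrt_sq hν.le, neg_div, Real.rpow_neg (by positivity),
      ← Real.sqrt_eq_rpow, mul_assoc 2]
    have : 0 < Real.sqrt (1 + z ^ 2) := Real.sqrt_pos.2 (by positivity)
    field_simp
  have main := (hasDerivAt_integral_of_dominated_loc_of_deriv_le
    (μ := volume.restrict (Set.Ioi (0:ℝ))) (x₀ := ν₀)
    (F := fun ν u => (Real.sqrt (ν ^ 2 + u ^ 2))⁻¹ * jA (2 * u))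
    (F' := fun ν u => -(ν / Real.sqrt (ν ^ 2 + u ^ 2)) / (Real.sqrt (ν ^ 2 + u ^ 2)) ^ 2 * jA (2 * u))
    (bound := fun u => (max 1 ((ν₀ / 2) ^ 2)⁻¹ * Real.pi) * (1 + u ^ 2)⁻¹)
    (s := Set.Ioi (ν₀ / 2)) (Ioi_mem_nhds (by linarith)) ?_ ?_ ?_ ?_ ?_ ?_).2
  · refine ⟨_, main.congr_of_eventuallyEq ?_⟩
    filter_upwards [Ioi_mem_nhds hν] with ν hν'
    exact key ν hν'
  · exact Filter.Eventually.of_forall fun y => (by fun_prop : Measurable _).aestronglyMeasurable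
  · obtain ⟨C, hC, h⟩ := j_decay
    have h0 := I0_int ν₀ hν
    have h1 := (integrableOn_Ioi_comp_mul_left_iff
      (fun u => (Real.sqrt (ν₀ ^ 2 + u ^ 2))⁻¹ * jA (2 * u)) 0 hν).1
    rw [mul_zero] at h1
    apply h1
    refine (h0.const_mul (ν₀⁻¹)).congr (Filter.Eventually.of_forall fun z => ?_)
    have e : ν₀ ^ 2 + (ν₀ * z) ^ 2 = ν₀ ^ 2 * (1 + z ^ 2) := by ring
    simp only
    rw [e, Real.sqrt_mul (by positivity), Real.sqrt_sq hν.le, neg_div, Real.rpow_neg (by positivity),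
      ← Real.sqrt_eq_rpow, mul_assoc 2, mul_inv, mul_assoc]
  · exact (by fun_prop : Measurable _).aestronglyMeasurable
  · refine (Filter.Eventually.of_forall fun u ν hν' => ?_)
    have hν1 : ν₀ / 2 < ν := hν'
    have hν0 : 0 < ν := lt_trans (by positivity) hν1
    have hs : 0 < Real.sqrt (ν ^ 2 + u ^ 2) := Real.sqrt_pos.2 (by positivity)
    have hle : ν ≤ Real.sqrt (ν ^ 2 + u ^ 2) := Real.le_sqrt_of_sq_le (by nlinarith)
    rw [norm_mul, mul_right_comm]
    refine mul_le_mul ?_ (jA_le _) (norm_nonneg _) (by positivity)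
    rw [norm_div, norm_neg, Real.norm_of_nonneg (by positivity), Real.norm_of_nonneg (by positivity),
      Real.sq_sqrt (by positivity)]
    have h1 : ν / Real.sqrt (ν ^ 2 + u ^ 2) ≤ 1 := (div_le_one hs).2 hle
    refine (div_le_div_of_nonneg_right h1 (by positivity)).trans ?_
    rw [← div_eq_mul_inv, div_le_div_iff₀ (by positivity) (by positivity)]
    have m1 := le_max_left 1 ((ν₀ / 2) ^ 2)⁻¹
    have m2 := le_max_right 1 ((ν₀ / 2) ^ 2)⁻¹
    have m3 : 1 ≤ max 1 ((ν₀ / 2) ^ 2)⁻¹ * ν ^ 2 := by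
      calc (1:ℝ) = ((ν₀ / 2) ^ 2)⁻¹ * (ν₀ / 2) ^ 2 := by field_simp
        _ ≤ _ := by gcongr
    nlinarith [sq_nonneg u, mul_le_mul_of_nonneg_right m1 (sq_nonneg u)]
  · exact (integrable_inv_one_add_sq.const_mul _).integrableOn
  · refine (Filter.Eventually.of_forall fun u ν hν' => ?_)
    have hν1 : ν₀ / 2 < ν := hν'
    have hν0 : 0 < ν := lt_trans (by positivity) hν1
    have hs : 0 < Real.sqrt (ν ^ 2 + u ^ 2) := Real.sqrt_pos.2 (by positivity)
    have hd := (((hasDerivAt_pow 2 ν).add_const (u ^ 2)).sqrt (by positivity)).inv hs.ne'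
    refine (hd.mul_const (jA (2 * u))).congr_deriv ?_
    congr 3
    field_simp
    simp

open MeasureTheory in
lemma G_deriv (ν γ : ℝ) (hν : 0 < ν) :
    HasDerivAt (fun g => ∫ z in Set.Ioi (0:ℝ), (1 + z ^ 2) ^ (-(1:ℝ)/2) *
      (2 * Real.sqrt (z ^ 2 + g ^ 2) * jB (2 * ν * Real.sqrt (z ^ 2 + g ^ 2))
        - 2 * z * jB (2 * ν * z)))
      (∫ z in Set.Ioi (0:ℝ), (1 + z ^ 2) ^ (-(1:ℝ)/2) *
        (-(4 * ν * γ) * jA (2 * ν * Real.sqrt (z ^ 2 + γ ^ 2)))) γ := by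
  obtain ⟨C, hC, h⟩ := j_decay
  have hA := jA_cont.measurable
  have hB := jB_cont.measurable
  refine (hasDerivAt_integral_of_dominated_loc_of_deriv_le (μ := volume.restrict (Set.Ioi (0:ℝ)))
    (F := fun g z => (1 + z ^ 2) ^ (-(1:ℝ)/2) *
      (2 * Real.sqrt (z ^ 2 + g ^ 2) * jB (2 * ν * Real.sqrt (z ^ 2 + g ^ 2))
        - 2 * z * jB (2 * ν * z)))
    (F' := fun g z => (1 + z ^ 2) ^ (-(1:ℝ)/2) *
        (-(4 * ν * g) * jA (2 * ν * Real.sqrt (z ^ 2 + g ^ 2))))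
    (bound := fun z => (4 * ν * (|γ| + 1) * (C / Real.sqrt (2 * ν))) *
      ((1 + z ^ 2) ^ (-(1:ℝ)/2) * (1 / Real.sqrt z)))
    (s := Metric.ball γ 1) (Metric.ball_mem_nhds _ one_pos) ?_ ?_ ?_ ?_ ?_ ?_).2
  · exact Filter.Eventually.of_forall fun y => (by fun_prop : Measurable _).aestronglyMeasurable
  · exact (D_deriv ν γ hν).1
  · exact (by fun_prop : Measurable _).aestronglyMeasurable
  · refine (ae_restrict_iff' measurableSet_Ioi).2 (Filter.Eventually.of_forall fun z hz g hg => ?_)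
    have hz0 : 0 < z := hz
    have hg' : |g| ≤ |γ| + 1 := by
      rw [Metric.mem_ball, Real.dist_eq] at hg
      have := abs_add_le γ (g - γ)
      rw [add_sub_cancel] at this
      linarith
    rw [norm_mul, Real.norm_of_nonneg (by positivity), mul_left_comm]
    refine mul_le_mul_of_nonneg_left ?_ (by positivity)
    rw [norm_mul, norm_neg, norm_mul, Real.norm_of_nonneg (by positivity : 0 ≤ 4 * ν), mul_assoc _ _ (1 / _)]
    refine mul_le_mul ?_ (jA_bound hC h ν ν z g hν le_rfl hz0) (norm_nonneg _) (by positivity)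
    gcongr
    exact hg'
  · exact W_int.const_mul _
  · refine (ae_restrict_iff' measurableSet_Ioi).2 (Filter.Eventually.of_forall fun z hz g hg => ?_)
    exact ((P_deriv ν z g hz).sub_const _).const_mul _

lemma psiV_eq (ν g : ℝ) : psiV ν g = -(1 / Real.pi) * ((1 / Real.pi) *
    ∫ z in Set.Ioi (0:ℝ), (1 + z ^ 2) ^ (-(1:ℝ)/2) * jA (2 * ν * Real.sqrt (z ^ 2 + g ^ 2))) := by
  unfold psiV
  simp_rw [besselJ_zero, mul_left_comm _ (1 / Real.pi), MeasureTheory.integral_const_mul]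
  ring

/-- `ψ_V` satisfies the wave equation `∂²ψ_V/∂ν∂γ + 4νγ ψ_V = 0`
(for `ν = √α` with `α > 0`). -/
theorem stmt15 (α γ : ℝ) (hα : 0 < α) :
    deriv (fun γ' => deriv (fun ν' => psiV ν' γ') (Real.sqrt α)) γ
      + 4 * Real.sqrt α * γ * psiV (Real.sqrt α) γ = 0 := by
  have hν : 0 < Real.sqrt α := Real.sqrt_pos.2 hα
  set ν := Real.sqrt α
  obtain ⟨a, ha⟩ := A_deriv ν hν
  have h1 : ∀ g, deriv (fun ν' => psiV ν' g) ν = -(1 / Real.pi) * ((1 / Real.pi) *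
      (a + ∫ z in Set.Ioi (0:ℝ), (1 + z ^ 2) ^ (-(1:ℝ)/2) *
      (2 * Real.sqrt (z ^ 2 + g ^ 2) * jB (2 * ν * Real.sqrt (z ^ 2 + g ^ 2))
        - 2 * z * jB (2 * ν * z)))) := by
    intro g
    apply HasDerivAt.deriv
    refine (((ha.add (D_deriv ν g hν).2).const_mul (1 / Real.pi)).const_mul
      (-(1 / Real.pi))).congr_of_eventuallyEq ?_
    filter_upwards [Ioi_mem_nhds hν] with ν' hν'
    rw [psiV_eq]
    simp only [Pi.add_apply]
    congr 2
    simp_rw [mul_sub]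
    rw [MeasureTheory.integral_sub (I_int ν' g hν') (I0_int ν' hν')]
    ring
  simp_rw [h1]
  rw [((((G_deriv ν γ hν).const_add a).const_mul (1 / Real.pi)).const_mul (-(1 / Real.pi))).deriv,
    psiV_eq]
  simp_rw [mul_left_comm _ (-(4 * ν * γ)), MeasureTheory.integral_const_mul]
  ring
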